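/- Let P ⊂ ℝ^n be a convex polytope as in the context. Then the map F ↦ σ̃(F) = {i : F ⊆ F_i} is a bijection from the set of nonempty faces of P (including P itself) onto F(K_P), the set of all intersections of nonempty collections of maximal simplices of K_P, and this bijection reverses inclusion: F ⊆ G if and only if σ̃(F) ⊇ σ̃(G). In particular F(K_P) coincides with the hypergraph G_P = {σ̃(F) : F a nonempty face of P}. -/

import Mathlib

/-!
Write `ℓ i x = ⟨a i, x⟩ + b i`. A face `F` is recovered from `σ̃(F)` as the set of points of `P`
where all `ℓ i`, `i ∈ σ̃(F)`, vanish (`faceOf_sigmaFace`); this gives injectivity and the reversal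
of inclusion.

A maximal simplex `τ` satisfies `τ = σ̃(faceOf τ)`, and fixed points of `σ̃ ∘ faceOf` are stable
under intersection because `faceOf` and `σ̃` reverse inclusion. So every face simplex is `σ̃` of a
nonempty face (`sigmaFace_faceOf_of_isFaceSimplex`).

Conversely, `σ̃(F)` has to be the intersection of the maximal simplices containing it. The key is
`exists_isMaxSimplex_not_mem`: if `F ⊄ F_i`, some maximal simplex containing `σ̃(F)` misses `i`.
Among the points of `F` where `ℓ i` attains its maximum over `F` (which is positive), take `x` with
maximal active set `{j : ℓ j x = 0}`. If this active set were not a maximal simplex, a point `y`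
with strictly larger active set would lie in `F` and satisfy `ℓ i y < ℓ i x`; moving from `x` a
little further away from `y` stays in `F` and increases `ℓ i`, a contradiction.
-/

noncomputable section
open scoped Classical

/-- The convex polytope `P = {x : ⟨a i, x⟩ + b i ≥ 0 for all i}` in `ℝⁿ`. -/
def polytope (n m : ℕ) (a : Fin m → Fin n → ℝ) (b : Fin m → ℝ) : Set (Fin n → ℝ) :=
  {x | ∀ i, 0 ≤ (∑ j, a i j * x j) + b i}

/-- The `i`-th facet `F i = {x ∈ P : ⟨a i, x⟩ + b i = 0}`. -/
def facet (n m : ℕ) (a : Fin m → Fin n → ℝ) (b : Fin m → ℝ) (i : Fin m) : Set (Fin n → ℝ) :=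
  {x | x ∈ polytope n m a b ∧ (∑ j, a i j * x j) + b i = 0}

/-- Dimension of the affine span of a subset of `ℝⁿ`. -/
def sdim {n : ℕ} (F : Set (Fin n → ℝ)) : ℕ :=
  Module.finrank ℝ (affineSpan ℝ F).direction

/-- The face of `P` cut out by the facets indexed by `S` (`S = ∅` gives `P` itself). -/
def faceOf (n m : ℕ) (a : Fin m → Fin n → ℝ) (b : Fin m → ℝ) (S : Finset (Fin m)) :
    Set (Fin n → ℝ) :=
  polytope n m a b ∩ ⋂ i ∈ S, facet n m a b i

/-- The finset of all nonempty faces of `P` (including `P` itself). -/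
def facesFinset (n m : ℕ) (a : Fin m → Fin n → ℝ) (b : Fin m → ℝ) :
    Finset (Set (Fin n → ℝ)) :=
  (Finset.univ.filter fun S : Finset (Fin m) => (faceOf n m a b S).Nonempty).image
    (faceOf n m a b)

/-- `m(F)`: the number of facets of `P` containing `F`. -/
def mOf (n m : ℕ) (a : Fin m → Fin n → ℝ) (b : Fin m → ℝ) (F : Set (Fin n → ℝ)) : ℕ :=
  (Finset.univ.filter fun i => F ⊆ facet n m a b i).card

/-- The nerve complex `K_P` as a finset of finsets. -/
def nerveFinset (n m : ℕ) (a : Fin m → Fin n → ℝ) (b : Fin m → ℝ) :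
    Finset (Finset (Fin m)) :=
  Finset.univ.filter fun S : Finset (Fin m) => (faceOf n m a b S).Nonempty

/-- `σ` is a maximal (under inclusion) simplex of `K`. -/
def IsMaxSimplex {m : ℕ} (K : Finset (Finset (Fin m))) (σ : Finset (Fin m)) : Prop :=
  σ ∈ K ∧ ∀ τ ∈ K, σ ⊆ τ → σ = τ

/-- `σ` is a face simplex of `K`: an intersection of a nonempty collection of
maximal simplices of `K`. -/
def IsFaceSimplex {m : ℕ} (K : Finset (Finset (Fin m))) (σ : Finset (Fin m)) : Prop :=
  ∃ S : Finset (Finset (Fin m)), S.Nonempty ∧ (∀ τ ∈ S, IsMaxSimplex K τ) ∧ σ = S.inf id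

/-- The set of nonempty faces of `P` (including `P` itself). -/
def facesSet (n m : ℕ) (a : Fin m → Fin n → ℝ) (b : Fin m → ℝ) : Set (Set (Fin n → ℝ)) :=
  {G | ∃ S : Finset (Fin m), G = faceOf n m a b S ∧ G.Nonempty}

/-- `σ̃(F) = {i : F ⊆ F_i}`. -/
def sigmaFace (n m : ℕ) (a : Fin m → Fin n → ℝ) (b : Fin m → ℝ) (F : Set (Fin n → ℝ)) :
    Finset (Fin m) :=
  Finset.univ.filter fun i => F ⊆ facet n m a b i

/-- The affine function `x ↦ ⟨a i, x⟩ + b i` defining the `i`-th facet. -/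
def ell {n m : ℕ} (a : Fin m → Fin n → ℝ) (b : Fin m → ℝ) (i : Fin m) (x : Fin n → ℝ) : ℝ :=
  (∑ j, a i j * x j) + b i

/-- The active set of `x`: the indices `i` with `⟨a i, x⟩ + b i = 0`. -/
def active {n m : ℕ} (a : Fin m → Fin n → ℝ) (b : Fin m → ℝ) (x : Fin n → ℝ) : Finset (Fin m) :=
  Finset.univ.filter fun i => ell a b i x = 0

section

variable {n m : ℕ} {a : Fin m → Fin n → ℝ} {b : Fin m → ℝ}

lemma mem_active {x : Fin n → ℝ} {i : Fin m} : i ∈ active a b x ↔ ell a b i x = 0 := by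
  simp [active]

lemma mem_polytope {x : Fin n → ℝ} : x ∈ polytope n m a b ↔ ∀ i, 0 ≤ ell a b i x := Iff.rfl

lemma mem_facet {x : Fin n → ℝ} {i : Fin m} :
    x ∈ facet n m a b i ↔ x ∈ polytope n m a b ∧ ell a b i x = 0 := Iff.rfl

lemma mem_faceOf {x : Fin n → ℝ} {S : Finset (Fin m)} :
    x ∈ faceOf n m a b S ↔ x ∈ polytope n m a b ∧ ∀ i ∈ S, ell a b i x = 0 := by
  simp only [faceOf, Set.mem_inter_iff, Set.mem_iInter, mem_facet]
  exact ⟨fun h => ⟨h.1, fun i hi => (h.2 i hi).2⟩, fun h => ⟨h.1, fun i hi => ⟨h.1, h.2 i hi⟩⟩⟩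

lemma mem_sigmaFace {F : Set (Fin n → ℝ)} {i : Fin m} :
    i ∈ sigmaFace n m a b F ↔ F ⊆ facet n m a b i := by
  simp [sigmaFace]

lemma mem_nerveFinset {S : Finset (Fin m)} :
    S ∈ nerveFinset n m a b ↔ (faceOf n m a b S).Nonempty := by
  simp [nerveFinset]

lemma continuous_ell (i : Fin m) : Continuous (ell a b i) := by
  unfold ell
  fun_prop

/-- The value of `ell` at a point on the line through `x` and `y`, beyond `x`. -/
lemma ell_extrapolate (i : Fin m) (x y : Fin n → ℝ) (t : ℝ) :
    ell a b i (x + t • (x - y)) = ell a b i x + t * (ell a b i x - ell a b i y) := by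
  have h : ∀ j, a i j * (x + t • (x - y)) j
      = a i j * x j + t * (a i j * x j - a i j * y j) := by
    intro j
    simp only [Pi.add_apply, Pi.smul_apply, Pi.sub_apply, smul_eq_mul]
    ring
  simp only [ell, h, Finset.sum_add_distrib, ← Finset.mul_sum, Finset.sum_sub_distrib]
  ring

lemma faceOf_anti {S T : Finset (Fin m)} (h : S ⊆ T) :
    faceOf n m a b T ⊆ faceOf n m a b S := fun _ hx =>
  mem_faceOf.2 ⟨(mem_faceOf.1 hx).1, fun i hi => (mem_faceOf.1 hx).2 i (h hi)⟩

lemma sigmaFace_anti {F G : Set (Fin n → ℝ)} (h : F ⊆ G) :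
    sigmaFace n m a b G ⊆ sigmaFace n m a b F := fun _ hi =>
  mem_sigmaFace.2 (h.trans (mem_sigmaFace.1 hi))

lemma subset_sigmaFace_faceOf (S : Finset (Fin m)) :
    S ⊆ sigmaFace n m a b (faceOf n m a b S) := fun i hi =>
  mem_sigmaFace.2 fun _ hx => mem_facet.2 ⟨(mem_faceOf.1 hx).1, (mem_faceOf.1 hx).2 i hi⟩

lemma faceOf_sigmaFace {F : Set (Fin n → ℝ)} (hF : F ∈ facesSet n m a b) :
    faceOf n m a b (sigmaFace n m a b F) = F := by
  obtain ⟨S, rfl, -⟩ := hF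
  refine (faceOf_anti (subset_sigmaFace_faceOf S)).antisymm fun x hx => ?_
  exact mem_faceOf.2 ⟨(mem_faceOf.1 hx).1, fun i hi => (mem_facet.1 (mem_sigmaFace.1 hi hx)).2⟩

lemma sigmaFace_subset_iff {F G : Set (Fin n → ℝ)} (hF : F ∈ facesSet n m a b)
    (hG : G ∈ facesSet n m a b) :
    F ⊆ G ↔ sigmaFace n m a b G ⊆ sigmaFace n m a b F := by
  refine ⟨sigmaFace_anti, fun h => ?_⟩
  rw [← faceOf_sigmaFace hF, ← faceOf_sigmaFace hG]
  exact faceOf_anti h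

lemma isClosed_faceOf (S : Finset (Fin m)) : IsClosed (faceOf n m a b S) := by
  have h : faceOf n m a b S = (⋂ i, {x | 0 ≤ ell a b i x}) ∩ ⋂ i ∈ S, {x | ell a b i x = 0} := by
    ext x
    simp [mem_faceOf, mem_polytope]
  rw [h]
  exact (isClosed_iInter fun i => isClosed_le continuous_const (continuous_ell i)).inter
    (isClosed_biInter fun i _ => isClosed_eq (continuous_ell i) continuous_const)

/-- If every constraint active at `x` is active at `y`, the segment from `y` to `x` can be
extended a little beyond `x` inside `P`. -/
lemma exists_extrapolate_mem {x y : Fin n → ℝ} (hx : x ∈ polytope n m a b)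
    (hxy : active a b x ⊆ active a b y) :
    ∃ t : ℝ, 0 < t ∧ x + t • (x - y) ∈ polytope n m a b := by
  have h : ∀ᶠ t : ℝ in nhdsWithin 0 (Set.Ioi 0), ∀ j,
      0 ≤ ell a b j x + t * (ell a b j x - ell a b j y) := by
    refine Filter.eventually_all.2 fun j => ?_
    by_cases hj : ell a b j x = 0
    · have hy : ell a b j y = 0 := mem_active.1 (hxy (mem_active.2 hj))
      simp [hj, hy]
    · have hpos : 0 < ell a b j x := lt_of_le_of_ne (mem_polytope.1 hx j) (Ne.symm hj)
      have hc : Filter.Tendsto (fun t : ℝ => ell a b j x + t * (ell a b j x - ell a b j y))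
          (nhds 0) (nhds (ell a b j x)) := by
        have : Continuous (fun t : ℝ => ell a b j x + t * (ell a b j x - ell a b j y)) := by
          fun_prop
        simpa using this.tendsto 0
      exact ((hc.eventually (lt_mem_nhds hpos)).filter_mono nhdsWithin_le_nhds).mono
        fun _ ht => ht.le
  obtain ⟨t, ht, htpos⟩ := (h.and self_mem_nhdsWithin).exists
  exact ⟨t, htpos, mem_polytope.2 fun j => by rw [ell_extrapolate]; exact ht j⟩

/-- If the face `F` cut out by `S` is not contained in `F_i`, then some maximal simplex of `K_P`
contains `S` but not `i`: it is the active set of a suitable point of `F` maximizing `ell a b i`. -/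
lemma exists_isMaxSimplex_not_mem (hcomp : IsCompact (polytope n m a b)) {S : Finset (Fin m)}
    {i : Fin m} (hi : ¬ faceOf n m a b S ⊆ facet n m a b i) :
    ∃ τ, IsMaxSimplex (nerveFinset n m a b) τ ∧ S ⊆ τ ∧ i ∉ τ := by
  obtain ⟨p, hpF, hpi⟩ := Set.not_subset.1 hi
  have hpP := (mem_faceOf.1 hpF).1
  have hppos : 0 < ell a b i p :=
    lt_of_le_of_ne (mem_polytope.1 hpP i) fun h => hpi (mem_facet.2 ⟨hpP, h.symm⟩)
  have hFc : IsCompact (faceOf n m a b S) :=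
    hcomp.of_isClosed_subset (isClosed_faceOf S) Set.inter_subset_left
  obtain ⟨x₀, hx₀F, hx₀⟩ := hFc.exists_isMaxOn ⟨p, hpF⟩ (continuous_ell (b := b) i).continuousOn
  -- Among the maximizers of `ell a b i` on the face, choose one with maximal active set.
  obtain ⟨τ, hτ⟩ := (Set.toFinite (active a b ''
    {x | x ∈ faceOf n m a b S ∧ ell a b i x = ell a b i x₀})).exists_maximal
    ⟨_, x₀, ⟨hx₀F, rfl⟩, rfl⟩
  obtain ⟨⟨x, ⟨hxF, hxi⟩, rfl⟩, hmax⟩ := hτ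
  have hxP := (mem_faceOf.1 hxF).1
  have hSx : S ⊆ active a b x := fun j hj => mem_active.2 ((mem_faceOf.1 hxF).2 j hj)
  refine ⟨active a b x, ⟨mem_nerveFinset.2 ⟨x, mem_faceOf.2 ⟨hxP, fun j hj => mem_active.1 hj⟩⟩,
    fun ρ hρ hxρ => ?_⟩, hSx, fun h => ?_⟩
  · obtain ⟨y, hy⟩ := mem_nerveFinset.1 hρ
    obtain ⟨hyP, hyρ⟩ := mem_faceOf.1 hy
    have hρy : ρ ⊆ active a b y := fun j hj => mem_active.2 (hyρ j hj)
    have hxy := hxρ.trans hρy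
    have hyF : y ∈ faceOf n m a b S :=
      mem_faceOf.2 ⟨hyP, fun j hj => mem_active.1 (hxy (hSx hj))⟩
    have hyi : ell a b i y = ell a b i x₀ := by
      refine le_antisymm (hx₀ hyF) (not_lt.1 fun hlt => ?_)
      -- Otherwise a point slightly beyond `x` on the line from `y` beats the maximum.
      obtain ⟨t, ht, hz⟩ := exists_extrapolate_mem hxP hxy
      have hzF : x + t • (x - y) ∈ faceOf n m a b S := by
        refine mem_faceOf.2 ⟨hz, fun j hj => ?_⟩
        rw [ell_extrapolate, (mem_faceOf.1 hxF).2 j hj, (mem_faceOf.1 hyF).2 j hj]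
        simp
      have hle : ell a b i (x + t • (x - y)) ≤ ell a b i x₀ := hx₀ hzF
      rw [ell_extrapolate, hxi] at hle
      have := mul_pos ht (sub_pos.2 hlt)
      linarith
    exact hxρ.antisymm (hρy.trans (hmax ⟨y, ⟨hyF, hyi⟩, rfl⟩ hxy))
  · have h0 : ell a b i x = 0 := mem_active.1 h
    have hle : ell a b i p ≤ ell a b i x₀ := hx₀ hpF
    linarith

lemma exists_isMaxSimplex_superset {S : Finset (Fin m)} (hS : S ∈ nerveFinset n m a b) :
    ∃ τ, IsMaxSimplex (nerveFinset n m a b) τ ∧ S ⊆ τ := by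
  obtain ⟨τ, hSτ, hτ⟩ := (nerveFinset n m a b).exists_le_maximal hS
  exact ⟨τ, ⟨hτ.prop, fun ρ hρ h => h.antisymm (hτ.le_of_ge hρ h)⟩, hSτ⟩

lemma isFaceSimplex_sigmaFace (hcomp : IsCompact (polytope n m a b)) {F : Set (Fin n → ℝ)}
    (hF : F ∈ facesSet n m a b) :
    IsFaceSimplex (nerveFinset n m a b) (sigmaFace n m a b F) := by
  have hFF := faceOf_sigmaFace hF
  obtain ⟨-, -, hne⟩ := hF
  obtain ⟨τ₀, hτ₀, hsub₀⟩ := exists_isMaxSimplex_superset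
    (mem_nerveFinset.2 (hFF.symm ▸ hne : (faceOf n m a b (sigmaFace n m a b F)).Nonempty))
  refine ⟨Finset.univ.filter fun τ =>
    IsMaxSimplex (nerveFinset n m a b) τ ∧ sigmaFace n m a b F ⊆ τ,
    ⟨τ₀, by simp [hτ₀, hsub₀]⟩, fun τ hτ => (Finset.mem_filter.1 hτ).2.1, ?_⟩
  refine Finset.Subset.antisymm (Finset.le_inf fun τ hτ => (Finset.mem_filter.1 hτ).2.2)
    fun i hi => ?_
  by_contra hiF
  rw [mem_sigmaFace, ← hFF] at hiF
  obtain ⟨τ, hτ, hsub, hiτ⟩ := exists_isMaxSimplex_not_mem hcomp hiF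
  exact hiτ ((Finset.inf_le (f := id) (Finset.mem_filter.2 ⟨Finset.mem_univ τ, hτ, hsub⟩) :
    _ ≤ τ) hi)

/-- A maximal simplex is fixed by `σ̃ ∘ faceOf`, since `σ̃(faceOf τ)` is a simplex containing
`τ`. -/
lemma sigmaFace_faceOf_of_isMaxSimplex {τ : Finset (Fin m)}
    (hτ : IsMaxSimplex (nerveFinset n m a b) τ) :
    sigmaFace n m a b (faceOf n m a b τ) = τ := by
  have hne := mem_nerveFinset.1 hτ.1
  refine (hτ.2 _ (mem_nerveFinset.2 ?_) (subset_sigmaFace_faceOf τ)).symm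
  rwa [faceOf_sigmaFace ⟨τ, rfl, hne⟩]

lemma sigmaFace_faceOf_of_isFaceSimplex {σ : Finset (Fin m)}
    (hσ : IsFaceSimplex (nerveFinset n m a b) σ) :
    (faceOf n m a b σ).Nonempty ∧ sigmaFace n m a b (faceOf n m a b σ) = σ := by
  obtain ⟨T, ⟨τ₀, hτ₀⟩, hT, rfl⟩ := hσ
  have hle : ∀ τ ∈ T, T.inf id ⊆ τ := fun τ hτ => Finset.inf_le (f := id) hτ
  refine ⟨(mem_nerveFinset.1 (hT τ₀ hτ₀).1).mono (faceOf_anti (hle τ₀ hτ₀)),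
    Finset.Subset.antisymm (Finset.le_inf fun τ hτ => ?_) (subset_sigmaFace_faceOf _)⟩
  exact (sigmaFace_anti (faceOf_anti (hle τ hτ))).trans
    (sigmaFace_faceOf_of_isMaxSimplex (hT τ hτ)).subset

end

/-- The map `F ↦ σ̃(F) = {i : F ⊆ F_i}` is an inclusion-reversing bijection from the
nonempty faces of `P` (including `P`) onto the set `F(K_P)` of face simplices of the
nerve complex `K_P`; in particular `F(K_P)` coincides with the hypergraph
`G_P = {σ̃(F) : F a nonempty face}`. -/
theorem faces_bijOn_faceSimplices
    (n m : ℕ) (hn : 1 ≤ n) (hm : 1 ≤ m)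
    (a : Fin m → Fin n → ℝ) (b : Fin m → ℝ)
    (hcomp : IsCompact (polytope n m a b))
    (hint : (interior (polytope n m a b)).Nonempty)
    (hfacet : ∀ i, sdim (facet n m a b i) = n - 1)
    (hdist : ∀ i j : Fin m, i ≠ j → facet n m a b i ≠ facet n m a b j) :
    Set.BijOn (sigmaFace n m a b) (facesSet n m a b)
      {σ : Finset (Fin m) | IsFaceSimplex (nerveFinset n m a b) σ} ∧
    (∀ F ∈ facesSet n m a b, ∀ G ∈ facesSet n m a b,
      (F ⊆ G ↔ sigmaFace n m a b G ⊆ sigmaFace n m a b F)) ∧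
    {σ : Finset (Fin m) | IsFaceSimplex (nerveFinset n m a b) σ} =
      sigmaFace n m a b '' facesSet n m a b := by
  have hbij : Set.BijOn (sigmaFace n m a b) (facesSet n m a b)
      {σ : Finset (Fin m) | IsFaceSimplex (nerveFinset n m a b) σ} := by
    refine ⟨fun F hF => isFaceSimplex_sigmaFace hcomp hF, fun F hF G hG h => ?_, fun σ hσ => ?_⟩
    · rw [← faceOf_sigmaFace hF, ← faceOf_sigmaFace hG, h]
    · obtain ⟨hne, hfix⟩ := sigmaFace_faceOf_of_isFaceSimplex hσ
      exact ⟨faceOf n m a b σ, ⟨σ, rfl, hne⟩, hfix⟩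
  exact ⟨hbij, fun F hF G hG => sigmaFace_subset_iff hF hG, hbij.image_eq.symm⟩
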